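/- Under the hypotheses listed in the context (maximal monotone A, β-cocoercive B, nonempty zero set Ω, variable metrics U_k with inverses V_k, parameters γ_k ∈ (0, 2β/‖U_k‖), α_k := 2β/(4β − γ_k‖U_k‖), λ_k ∈ (0, 1/α_k), summable perturbations, resolvent maps J_k, and the iteration x_{k+1} = x_k + λ_k·(J_k(x_k − γ_k·U_k(B x_k + b_k)) + a_k − x_k)), for every x* ∈ Ω the sequence of squared variable-metric distances k ↦ ⟨V_k(x_k − x*), x_k − x*⟩ converges to a finite limit, and the sequence {x_k} is bounded. -/

import Mathlib

open RealInnerProductSpace Filter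

/-!
Measure the distance to a zero `z` of `A + B` in the seminorm `‖y‖_k = √⟪V_k y, y⟫`.

* The exact step `T x = J (x - γ U (B x))` satisfies
  `4β ⟪V (T x - x), x - z⟫ ≤ -(4β - γ ‖U‖) ⟪V (T x - x), T x - x⟫`: monotonicity of `A` leaves the
  term `γ ⟪T x - z, B x - B z⟫`, which cocoercivity and Young's inequality bound below by
  `-γ ‖T x - x‖² / (4β)`, and `‖y‖² ≤ ‖U‖ ⟪V y, y⟫`. Expanding the square shows that the relaxed
  step does not increase the distance as long as `2βλ + γ ‖U‖ ≤ 4β`.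
* The resolvent is nonexpansive in this seminorm, so the errors contribute a summable amount.
* Inversion reverses the order of positive operators, so passing from `V_k` to `V_{k+1}` costs a
  factor at most `1 + η_k`.

Hence the distances satisfy `r_{k+1} ≤ (1 + η_k) (r_k + e_k)` with `η` and `e` summable, which
forces convergence.
-/

lemma exists_tendsto_of_succ_le_add {r e : ℕ → ℝ} (hr : BddBelow (Set.range r)) (he : Summable e)
    (hstep : ∀ k, r (k + 1) ≤ r k + e k) : ∃ l : ℝ, Tendsto r atTop (nhds l) := by
  obtain ⟨m, hm⟩ := hr
  have hsum := he.hasSum.tendsto_sum_nat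
  obtain ⟨S, hS⟩ := hsum.bddAbove_range
  set t : ℕ → ℝ := fun k => r k - ∑ i ∈ Finset.range k, e i with ht
  have ht_antitone : Antitone t := antitone_nat_of_succ_le fun k => by
    simp only [ht, Finset.sum_range_succ]
    linarith [hstep k]
  have ht_bddBelow : BddBelow (Set.range t) :=
    ⟨m - S, Set.forall_mem_range.2 fun k => sub_le_sub (hm ⟨k, rfl⟩) (hS ⟨k, rfl⟩)⟩
  exact ⟨_, ((tendsto_atTop_ciInf ht_antitone ht_bddBelow).add hsum).congr
    fun k => sub_add_cancel _ _⟩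

lemma exists_tendsto_of_succ_le_one_add_mul_add {r e η : ℕ → ℝ} (hr : ∀ k, 0 ≤ r k)
    (he : Summable e) (hη0 : ∀ k, 0 ≤ η k) (hη : Summable η)
    (hstep : ∀ k, r (k + 1) ≤ (1 + η k) * (r k + e k)) : ∃ l : ℝ, Tendsto r atTop (nhds l) := by
  set P : ℕ → ℝ := fun k => ∏ i ∈ Finset.range k, (1 + η i)
  have hP_succ (k : ℕ) : P (k + 1) = P k * (1 + η k) := Finset.prod_range_succ _ _
  have hP_one_le (k : ℕ) : 1 ≤ P k := Finset.one_le_prod fun i _ => by linarith [hη0 i]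
  have hP_pos (k : ℕ) : 0 < P k := one_pos.trans_le (hP_one_le k)
  have hP_tendsto := (Real.multipliable_one_add_of_summable hη).hasProd.tendsto_prod_nat
  have he_div : Summable fun k => e k / P k := he.norm.of_norm_bounded fun k => by
    rw [norm_div, Real.norm_of_nonneg (hP_pos k).le]
    exact div_le_self (norm_nonneg _) (hP_one_le k)
  have hstep_div (k : ℕ) : r (k + 1) / P (k + 1) ≤ r k / P k + e k / P k := by
    rw [← add_div, div_le_div_iff₀ (hP_pos _) (hP_pos _), hP_succ]
    nlinarith [hstep k, hP_pos k]
  have hbdd : BddBelow (Set.range fun k => r k / P k) :=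
    ⟨0, Set.forall_mem_range.2 fun k => div_nonneg (hr k) (hP_pos k).le⟩
  obtain ⟨l, hl⟩ := exists_tendsto_of_succ_le_add hbdd he_div hstep_div
  exact ⟨_, (hl.mul hP_tendsto).congr fun k => div_mul_cancel₀ _ (hP_pos k).ne'⟩

section ForwardBackward

variable {H : Type*} [NormedAddCommGroup H] [InnerProductSpace ℝ H]

section PositiveOperators

variable {P U V U' V' : H →L[ℝ] H}

lemma inner_apply_sq_le_of_isPositive (hP : P.IsPositive) (x y : H) :
    ⟪P x, y⟫ ^ 2 ≤ ⟪P x, x⟫ * ⟪P y, y⟫ :=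
  LinearMap.BilinForm.apply_sq_le_of_symm (innerₗ H ∘ₗ (P : H →ₗ[ℝ] H)) hP.inner_nonneg_left
    ⟨fun x y => (hP.inner_left_eq_inner_right x y).trans (real_inner_comm _ _)⟩ x y

lemma inner_apply_le_sqrt_mul_sqrt (hP : P.IsPositive) (x y : H) :
    ⟪P x, y⟫ ≤ √⟪P x, x⟫ * √⟪P y, y⟫ := by
  rw [← Real.sqrt_mul (hP.inner_nonneg_left x)]
  exact Real.le_sqrt_of_sq_le (inner_apply_sq_le_of_isPositive hP x y)

lemma inner_apply_add_smul (hP : P.IsPositive) (x y : H) (c : ℝ) :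
    ⟪P (x + c • y), x + c • y⟫ = ⟪P x, x⟫ + c * (2 * ⟪P y, x⟫ + c * ⟪P y, y⟫) := by
  have hsymm : ⟪P x, y⟫ = ⟪P y, x⟫ :=
    (hP.inner_left_eq_inner_right x y).trans (real_inner_comm _ _)
  simp only [map_add, map_smul, inner_add_left, inner_add_right, real_inner_smul_left,
    real_inner_smul_right, hsymm]
  ring

/-- The seminorm `x ↦ √⟪P x, x⟫` induced by a positive operator `P`. The variable-metric distances
of the iteration are its values for `P = V k`. -/
noncomputable def energySeminorm (P : H →L[ℝ] H) (hP : P.IsPositive) : Seminorm ℝ H :=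
  .of (fun x => √⟪P x, x⟫)
    (fun x y => by
      have hexpand := inner_apply_add_smul hP x y 1
      rw [one_smul] at hexpand
      refine Real.sqrt_le_iff.2 ⟨by positivity, ?_⟩
      rw [hexpand, add_sq, Real.sq_sqrt (hP.inner_nonneg_left x),
        Real.sq_sqrt (hP.inner_nonneg_left y)]
      linarith [inner_apply_le_sqrt_mul_sqrt hP y x])
    (fun c x => by
      rw [map_smul, real_inner_smul_left, real_inner_smul_right, ← mul_assoc,
        Real.sqrt_mul (mul_self_nonneg c), Real.sqrt_mul_self_eq_abs, Real.norm_eq_abs])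

lemma energySeminorm_apply (hP : P.IsPositive) (x : H) : energySeminorm P hP x = √⟪P x, x⟫ := rfl

lemma energySeminorm_sq (hP : P.IsPositive) (x : H) : energySeminorm P hP x ^ 2 = ⟪P x, x⟫ :=
  Real.sq_sqrt (hP.inner_nonneg_left x)

lemma isPositive_of_rightInverse (hU : U.IsPositive) (hUV : Function.RightInverse V U) :
    V.IsPositive := by
  refine (ContinuousLinearMap.isPositive_iff V).2 ⟨fun x y => ?_, fun x => ?_⟩
  · have h := hU.inner_left_eq_inner_right (V x) (V y)
    rw [hUV x, hUV y] at h
    exact h.symm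
  · have h := hU.inner_nonneg_right (V x)
    rwa [hUV x] at h

lemma inner_rightInverse_le_mul {c : ℝ} (hc : 0 ≤ c) (hU : U.IsPositive) (hU' : U'.IsPositive)
    (hUV : Function.RightInverse V U) (hUV' : Function.RightInverse V' U')
    (hle : ∀ z, ⟪U z, z⟫ ≤ c * ⟪U' z, z⟫) (z : H) : ⟪V' z, z⟫ ≤ c * ⟪V z, z⟫ := by
  have hV := (isPositive_of_rightInverse hU hUV).inner_nonneg_left z
  have hV' := (isPositive_of_rightInverse hU' hUV').inner_nonneg_left z
  have hcs : ⟪V' z, z⟫ * ⟪V' z, z⟫ ≤ c * ⟪V z, z⟫ * ⟪V' z, z⟫ := calc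
    ⟪V' z, z⟫ * ⟪V' z, z⟫ = ⟪U (V z), V' z⟫ ^ 2 := by rw [hUV z, real_inner_comm, sq]
    _ ≤ ⟪U (V z), V z⟫ * ⟪U (V' z), V' z⟫ := inner_apply_sq_le_of_isPositive hU _ _
    _ ≤ ⟪U (V z), V z⟫ * (c * ⟪U' (V' z), V' z⟫) :=
      mul_le_mul_of_nonneg_left (hle _) (hU.inner_nonneg_left _)
    _ = c * ⟪V z, z⟫ * ⟪V' z, z⟫ := by
      rw [hUV z, hUV' z, real_inner_comm, real_inner_comm (V' z)]; ring
  rcases hV'.eq_or_lt with hzero | hpos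
  · rw [← hzero]; positivity
  · exact le_of_mul_le_mul_right hcs hpos

lemma norm_sq_le_opNorm_mul_inner_rightInverse (hU : U.IsPositive)
    (hUV : Function.RightInverse V U) (z : H) : ‖z‖ ^ 2 ≤ ‖U‖ * ⟪V z, z⟫ := by
  have hle (y : H) : ⟪U y, y⟫ ≤ ‖U‖ * ⟪y, y⟫ := calc
    ⟪U y, y⟫ ≤ ‖U y‖ * ‖y‖ := real_inner_le_norm _ _
    _ ≤ ‖U‖ * ‖y‖ * ‖y‖ := mul_le_mul_of_nonneg_right (U.le_opNorm y) (norm_nonneg y)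
    _ = ‖U‖ * ⟪y, y⟫ := by rw [mul_assoc, real_inner_self_eq_norm_mul_norm]
  rw [← real_inner_self_eq_norm_sq]
  exact inner_rightInverse_le_mul (U' := .id ℝ H) (V' := .id ℝ H) (norm_nonneg U) hU
    ContinuousLinearMap.isPositive_id hUV (fun _ => rfl) hle z

lemma energySeminorm_rightInverse_le_sqrt_mul {c : ℝ} (hc : 0 ≤ c) (hU : U.IsPositive)
    (hU' : U'.IsPositive) (hUV : Function.RightInverse V U) (hUV' : Function.RightInverse V' U')
    (hle : ∀ z, ⟪U z, z⟫ ≤ c * ⟪U' z, z⟫) (z : H) :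
    energySeminorm V' (isPositive_of_rightInverse hU' hUV') z ≤
      √c * energySeminorm V (isPositive_of_rightInverse hU hUV) z := by
  rw [energySeminorm_apply, energySeminorm_apply, ← Real.sqrt_mul hc]
  exact Real.sqrt_le_sqrt (inner_rightInverse_le_mul hc hU hU' hUV hUV' hle z)

lemma energySeminorm_rightInverse_le_sqrt_inv_mul_norm {α : ℝ} (hα : 0 < α) (hU : U.IsPositive)
    (hUV : Function.RightInverse V U) (hcoercive : ∀ z, α * ‖z‖ ^ 2 ≤ ⟪U z, z⟫) (z : H) :
    energySeminorm V (isPositive_of_rightInverse hU hUV) z ≤ √α⁻¹ * ‖z‖ := by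
  have hle (y : H) : ⟪y, y⟫ ≤ α⁻¹ * ⟪U y, y⟫ := by
    rw [real_inner_self_eq_norm_sq, le_inv_mul_iff₀ hα]
    exact hcoercive y
  rw [norm_eq_sqrt_real_inner z]
  exact energySeminorm_rightInverse_le_sqrt_mul (U := .id ℝ H) (V := .id ℝ H)
    (inv_nonneg.2 hα.le) ContinuousLinearMap.isPositive_id hU (fun _ => rfl) hUV hle z

lemma norm_le_sqrt_opNorm_mul_energySeminorm (hU : U.IsPositive)
    (hUV : Function.RightInverse V U) (z : H) :
    ‖z‖ ≤ √‖U‖ * energySeminorm V (isPositive_of_rightInverse hU hUV) z := by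
  rw [energySeminorm_apply, ← Real.sqrt_mul (norm_nonneg U)]
  exact Real.le_sqrt_of_sq_le (norm_sq_le_opNorm_mul_inner_rightInverse hU hUV z)

end PositiveOperators

section SetValuedOperators

variable {A : H → Set H} {B J : H → H} {U V : H →L[ℝ] H} {β γ lam : ℝ}

/-- Monotonicity of a set-valued operator, encoded as a function into sets. It
makes resolvents nonexpansive. -/
def IsMonotoneOperator (A : H → Set H) : Prop :=
  ∀ x y u v : H, u ∈ A x → v ∈ A y → 0 ≤ ⟪x - y, u - v⟫

/-- `β`-cocoercivity of a single-valued operator, which controls the forward step. -/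
def IsCocoercive (β : ℝ) (B : H → H) : Prop :=
  ∀ x y : H, β * ‖B x - B y‖ ^ 2 ≤ ⟪x - y, B x - B y⟫

/-- The zeros of the sum `A + B`, the points sought by the iteration. -/
def zerosOfSum (A : H → Set H) (B : H → H) : Set H :=
  {z | ∃ u ∈ A z, u + B z = 0}

/-- `J` is the resolvent of `γ V⁻¹ A`, the backward step in the metric of `V`. The inclusion
`y - J y ∈ γ V⁻¹ A (J y)` is written with `γ V⁻¹` moved to the left, so that no inverse of `V` is
needed to state it. -/
def IsResolvent (A : H → Set H) (V : H →L[ℝ] H) (γ : ℝ) (J : H → H) : Prop :=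
  ∀ y : H, (1 / γ) • V (y - J y) ∈ A (J y)

/-- One exact, unrelaxed forward-backward step with metric `U` and step size `γ`: a forward step
along `B` followed by the backward step `J`. -/
def forwardBackwardStep (J : H → H) (U : H →L[ℝ] H) (γ : ℝ) (B : H → H) (x : H) : H :=
  J (x - γ • U (B x))

lemma IsCocoercive.neg_norm_sq_le (hB : IsCocoercive β B) (hβ : 0 ≤ β) (x z q : H) :
    -‖q‖ ^ 2 ≤ 4 * β * ⟪x - z + q, B x - B z⟫ := by
  set d := B x - B z
  have hyoung : 0 ≤ ‖q‖ ^ 2 + 4 * β * ⟪q, d⟫ + 4 * β * (β * ‖d‖ ^ 2) := calc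
    0 ≤ ‖q + (2 * β) • d‖ ^ 2 := sq_nonneg _
    _ = ‖q‖ ^ 2 + 4 * β * ⟪q, d⟫ + 4 * β * (β * ‖d‖ ^ 2) := by
      rw [norm_add_sq_real, real_inner_smul_right, norm_smul, mul_pow, Real.norm_eq_abs, sq_abs]
      ring
  have hcoc : 4 * β * (β * ‖d‖ ^ 2) ≤ 4 * β * ⟪x - z, d⟫ :=
    mul_le_mul_of_nonneg_left (hB x z) (by positivity)
  rw [inner_add_left]
  linarith

lemma IsResolvent.inner_sub_le (hJ : IsResolvent A V γ J) (hA : IsMonotoneOperator A) (hγ : 0 < γ)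
    (y y' : H) : ⟪V (J y - J y'), J y - J y'⟫ ≤ ⟪V (y - y'), J y - J y'⟫ := by
  have hmono := hA _ _ _ _ (hJ y) (hJ y')
  rw [← smul_sub, inner_smul_right, ← map_sub] at hmono
  have hinner := nonneg_of_mul_nonneg_right hmono (one_div_pos.2 hγ)
  rwa [sub_sub_sub_comm, map_sub, inner_sub_right, sub_nonneg, real_inner_comm,
    real_inner_comm (V (y - y'))] at hinner

lemma IsResolvent.energySeminorm_sub_le (hJ : IsResolvent A V γ J) (hA : IsMonotoneOperator A)
    (hγ : 0 < γ) (hV : V.IsPositive) (y y' : H) :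
    energySeminorm V hV (J y - J y') ≤ energySeminorm V hV (y - y') := by
  have hsq : energySeminorm V hV (J y - J y') * energySeminorm V hV (J y - J y') ≤
      energySeminorm V hV (y - y') * energySeminorm V hV (J y - J y') := by
    rw [← sq, energySeminorm_sq]
    exact (hJ.inner_sub_le hA hγ y y').trans (inner_apply_le_sqrt_mul_sqrt hV _ _)
  rcases (apply_nonneg (energySeminorm V hV) (J y - J y')).eq_or_lt with hzero | hpos
  · rw [← hzero]; exact apply_nonneg _ _
  · exact le_of_mul_le_mul_right hsq hpos

lemma inner_forwardBackwardStep_sub_add_le_zero (hA : IsMonotoneOperator A)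
    (hJ : IsResolvent A V γ J) (hγ : 0 < γ) (hVU : Function.LeftInverse V U) {z : H}
    (hz : z ∈ zerosOfSum A B) (x : H) :
    ⟪V (forwardBackwardStep J U γ B x - x), forwardBackwardStep J U γ B x - z⟫ +
      γ * ⟪forwardBackwardStep J U γ B x - z, B x - B z⟫ ≤ 0 := by
  obtain ⟨u, hu, huB⟩ := hz
  obtain rfl : u = -B z := eq_neg_of_add_eq_zero_left huB
  set p := forwardBackwardStep J U γ B x
  have hmono : 0 ≤ ⟪p - z, (1 / γ) • V (x - γ • U (B x) - p) - -B z⟫ :=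
    hA _ _ _ _ (hJ (x - γ • U (B x))) hu
  have hfactor : (1 / γ) • V (x - γ • U (B x) - p) - -B z =
      -((1 / γ) • (V (p - x) + γ • (B x - B z))) := by
    simp only [map_sub, map_smul, hVU (B x), smul_sub, smul_add, smul_smul,
      one_div_mul_cancel hγ.ne', one_smul]
    abel
  rw [hfactor, inner_neg_right, inner_smul_right, Left.nonneg_neg_iff] at hmono
  have hinner := nonpos_of_mul_nonpos_right hmono (one_div_pos.2 hγ)
  rwa [inner_add_right, inner_smul_right, real_inner_comm] at hinner

lemma inner_forwardBackwardStep_sub_le (hβ : 0 ≤ β) (hB : IsCocoercive β B)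
    (hA : IsMonotoneOperator A) (hU : U.IsPositive) (hVU : Function.LeftInverse V U)
    (hUV : Function.RightInverse V U) (hγ : 0 < γ) (hJ : IsResolvent A V γ J) {z : H}
    (hz : z ∈ zerosOfSum A B) (x : H) :
    4 * β * ⟪V (forwardBackwardStep J U γ B x - x), x - z⟫ ≤
      -(4 * β - γ * ‖U‖) *
        ⟪V (forwardBackwardStep J U γ B x - x), forwardBackwardStep J U γ B x - x⟫ := by
  have hmono := inner_forwardBackwardStep_sub_add_le_zero hA hJ hγ hVU hz x
  set q := forwardBackwardStep J U γ B x - x with hq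
  have hsplit : forwardBackwardStep J U γ B x - z = x - z + q := by rw [hq]; abel
  rw [hsplit, inner_add_right] at hmono
  have hmetric : γ * ‖q‖ ^ 2 ≤ γ * (‖U‖ * ⟪V q, q⟫) :=
    mul_le_mul_of_nonneg_left (norm_sq_le_opNorm_mul_inner_rightInverse hU hUV q) hγ.le
  have hcoc : γ * -‖q‖ ^ 2 ≤ γ * (4 * β * ⟪x - z + q, B x - B z⟫) :=
    mul_le_mul_of_nonneg_left (hB.neg_norm_sq_le hβ x z q) hγ.le
  have hmono_mul := mul_nonpos_of_nonneg_of_nonpos (by positivity : 0 ≤ 4 * β) hmono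
  linarith

lemma energySeminorm_relaxedStep_sub_le (hβ : 0 < β) (hB : IsCocoercive β B)
    (hA : IsMonotoneOperator A) (hU : U.IsPositive) (hVU : Function.LeftInverse V U)
    (hUV : Function.RightInverse V U) (hV : V.IsPositive) (hγ : 0 < γ) (hJ : IsResolvent A V γ J)
    (hlam : 0 ≤ lam) (hγlam : 2 * β * lam + γ * ‖U‖ ≤ 4 * β) {z : H}
    (hz : z ∈ zerosOfSum A B) (x : H) :
    energySeminorm V hV (x - z + lam • (forwardBackwardStep J U γ B x - x)) ≤
      energySeminorm V hV (x - z) := by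
  have hdescent := inner_forwardBackwardStep_sub_le hβ.le hB hA hU hVU hUV hγ hJ hz x
  set q := forwardBackwardStep J U γ B x - x
  have hcoeff : (2 * β * lam + γ * ‖U‖) * ⟪V q, q⟫ ≤ 4 * β * ⟪V q, q⟫ :=
    mul_le_mul_of_nonneg_right hγlam (hV.inner_nonneg_left q)
  have hcross : 2 * ⟪V q, x - z⟫ + lam * ⟪V q, q⟫ ≤ 0 :=
    nonpos_of_mul_nonpos_right (a := 2 * β) (by linarith) (by positivity)
  refine Real.sqrt_le_sqrt ?_
  rw [inner_apply_add_smul hV]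
  linarith [mul_nonpos_of_nonneg_of_nonpos hlam hcross]

lemma energySeminorm_perturbedStep_sub_le (hβ : 0 < β) (hB : IsCocoercive β B)
    (hA : IsMonotoneOperator A) (hU : U.IsPositive) (hVU : Function.LeftInverse V U)
    (hUV : Function.RightInverse V U) (hV : V.IsPositive) (hγ : 0 < γ) (hJ : IsResolvent A V γ J)
    (hlam : 0 ≤ lam) (hγlam : 2 * β * lam + γ * ‖U‖ ≤ 4 * β) {z : H}
    (hz : z ∈ zerosOfSum A B) (x a b : H) :
    energySeminorm V hV (x + lam • (J (x - γ • U (B x + b)) + a - x) - z) ≤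
      energySeminorm V hV (x - z) +
        lam * (energySeminorm V hV a + energySeminorm V hV (γ • U b)) := by
  set p := energySeminorm V hV
  set y := x - γ • U (B x) with hy
  set y' := x - γ • U (B x + b) with hy'
  have hdecomp : x + lam • (J y' + a - x) - z =
      (x - z + lam • (forwardBackwardStep J U γ B x - x)) + lam • (a + (J y' - J y)) := by
    simp only [forwardBackwardStep, smul_sub, smul_add]
    abel
  have hforward : y' - y = -(γ • U b) := by
    rw [hy, hy', map_add, smul_add]
    abel
  have hresolvent : p (J y' - J y) ≤ p (γ • U b) := by
    rw [← map_neg_eq_map p (γ • U b), ← hforward]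
    exact hJ.energySeminorm_sub_le hA hγ hV y' y
  calc p (x + lam • (J y' + a - x) - z)
      ≤ p (x - z + lam • (forwardBackwardStep J U γ B x - x)) + p (lam • (a + (J y' - J y))) :=
        hdecomp ▸ map_add_le_add p _ _
    _ ≤ p (x - z) + lam * p (a + (J y' - J y)) := by
        rw [map_smul_eq_mul, Real.norm_of_nonneg hlam]
        gcongr
        exact energySeminorm_relaxedStep_sub_le hβ hB hA hU hVU hUV hV hγ hJ hlam hγlam hz x
    _ ≤ p (x - z) + lam * (p a + p (γ • U b)) := by
        gcongr
        exact (map_add_le_add p _ _).trans (by gcongr)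

lemma energySeminorm_perturbedStep_sub_le_of_coercive (hβ : 0 < β) (hB : IsCocoercive β B)
    (hA : IsMonotoneOperator A) {α : ℝ} (hα : 0 < α) (hU : U.IsPositive)
    (hcoercive : ∀ z, α * ‖z‖ ^ 2 ≤ ⟪U z, z⟫) (hVU : Function.LeftInverse V U)
    (hUV : Function.RightInverse V U) (hV : V.IsPositive) (hγ : 0 < γ) (hJ : IsResolvent A V γ J)
    (hlam : 0 ≤ lam) (hγlam : 2 * β * lam + γ * ‖U‖ ≤ 4 * β) {z : H}
    (hz : z ∈ zerosOfSum A B) (x a b : H) :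
    energySeminorm V hV (x + lam • (J (x - γ • U (B x + b)) + a - x) - z) ≤
      energySeminorm V hV (x - z) + √α⁻¹ * (lam * ‖a‖ + 4 * β * (lam * ‖b‖)) := by
  have hγU : γ * ‖U‖ ≤ 4 * β := by linarith [mul_nonneg (mul_nonneg zero_le_two hβ.le) hlam]
  have hγUb : ‖γ • U b‖ ≤ 4 * β * ‖b‖ := calc
    ‖γ • U b‖ = γ * ‖U b‖ := by rw [norm_smul, Real.norm_of_nonneg hγ.le]
    _ ≤ γ * (‖U‖ * ‖b‖) := mul_le_mul_of_nonneg_left (U.le_opNorm b) hγ.le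
    _ = γ * ‖U‖ * ‖b‖ := (mul_assoc _ _ _).symm
    _ ≤ 4 * β * ‖b‖ := mul_le_mul_of_nonneg_right hγU (norm_nonneg b)
  have hbound := energySeminorm_rightInverse_le_sqrt_inv_mul_norm hα hU hUV hcoercive
  calc energySeminorm V hV (x + lam • (J (x - γ • U (B x + b)) + a - x) - z)
      ≤ energySeminorm V hV (x - z) +
          lam * (energySeminorm V hV a + energySeminorm V hV (γ • U b)) :=
        energySeminorm_perturbedStep_sub_le hβ hB hA hU hVU hUV hV hγ hJ hlam hγlam hz x a b
    _ ≤ energySeminorm V hV (x - z) + lam * (√α⁻¹ * ‖a‖ + √α⁻¹ * (4 * β * ‖b‖)) := by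
        gcongr
        · exact hbound a
        · exact (hbound _).trans (by gcongr)
    _ = energySeminorm V hV (x - z) + √α⁻¹ * (lam * ‖a‖ + 4 * β * (lam * ‖b‖)) := by ring

end SetValuedOperators

section Iteration

variable {A : H → Set H} {B : H → H} {β α : ℝ} {U V : ℕ → H →L[ℝ] H} {η γ lam : ℕ → ℝ}
  {a b x : ℕ → H} {J : ℕ → H → H}

lemma exists_tendsto_energySeminorm_sub (hβ : 0 < β) (hB : IsCocoercive β B)
    (hA : IsMonotoneOperator A) (hα : 0 < α) (hU : ∀ k, (U k).IsPositive)
    (hcoercive : ∀ k z, α * ‖z‖ ^ 2 ≤ ⟪U k z, z⟫) (hVU : ∀ k, Function.LeftInverse (V k) (U k))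
    (hUV : ∀ k, Function.RightInverse (V k) (U k)) (hV : ∀ k, (V k).IsPositive)
    (hη0 : ∀ k, 0 ≤ η k) (hη : Summable η)
    (hUmono : ∀ k z, ⟪U k z, z⟫ ≤ (1 + η k) * ⟪U (k + 1) z, z⟫) (hγ : ∀ k, 0 < γ k)
    (hlam : ∀ k, 0 ≤ lam k) (hγlam : ∀ k, 2 * β * lam k + γ k * ‖U k‖ ≤ 4 * β)
    (ha : Summable fun k => lam k * ‖a k‖) (hb : Summable fun k => lam k * ‖b k‖)
    (hJ : ∀ k, IsResolvent A (V k) (γ k) (J k))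
    (hx : ∀ k, x (k + 1) =
      x k + lam k • (J k (x k - γ k • U k (B (x k) + b k)) + a k - x k))
    {z : H} (hz : z ∈ zerosOfSum A B) :
    ∃ l : ℝ, Tendsto (fun k => energySeminorm (V k) (hV k) (x k - z)) atTop (nhds l) := by
  refine exists_tendsto_of_succ_le_one_add_mul_add (fun k => apply_nonneg _ _)
    ((ha.add (hb.mul_left (4 * β))).mul_left √α⁻¹) hη0 hη fun k => ?_
  have hone_le : 1 ≤ 1 + η k := le_add_of_nonneg_right (hη0 k)
  have hsqrt_le : √(1 + η k) ≤ 1 + η k :=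
    Real.sqrt_le_iff.2 ⟨by positivity, le_self_pow₀ hone_le two_ne_zero⟩
  have hstep := energySeminorm_perturbedStep_sub_le_of_coercive hβ hB hA hα (hU k) (hcoercive k)
    (hVU k) (hUV k) (hV k) (hγ k) (hJ k) (hlam k) (hγlam k) hz (x k) (a k) (b k)
  rw [← hx k] at hstep
  calc energySeminorm (V (k + 1)) (hV (k + 1)) (x (k + 1) - z)
      ≤ √(1 + η k) * energySeminorm (V k) (hV k) (x (k + 1) - z) :=
        energySeminorm_rightInverse_le_sqrt_mul (by positivity) (hU k) (hU (k + 1)) (hUV k)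
          (hUV (k + 1)) (hUmono k) _
    _ ≤ _ := mul_le_mul hsqrt_le hstep (apply_nonneg _ _) (by positivity)

lemma exists_norm_le_of_tendsto_energySeminorm_sub (hU : ∀ k, (U k).IsPositive)
    (hUV : ∀ k, Function.RightInverse (V k) (U k)) (hV : ∀ k, (V k).IsPositive) {μ : ℝ}
    (hUnorm : ∀ k, ‖U k‖ ≤ μ) {z : H} {l : ℝ}
    (hl : Tendsto (fun k => energySeminorm (V k) (hV k) (x k - z)) atTop (nhds l)) :
    ∃ M : ℝ, ∀ k, ‖x k‖ ≤ M := by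
  obtain ⟨R, hR⟩ := hl.bddAbove_range
  refine ⟨√μ * R + ‖z‖, fun k => ?_⟩
  calc ‖x k‖ ≤ ‖x k - z‖ + ‖z‖ := norm_le_norm_sub_add _ _
    _ ≤ √‖U k‖ * energySeminorm (V k) (hV k) (x k - z) + ‖z‖ := by
        gcongr
        exact norm_le_sqrt_opNorm_mul_energySeminorm (hU k) (hUV k) _
    _ ≤ √μ * R + ‖z‖ := by
        gcongr
        · exact hUnorm k
        · exact hR ⟨k, rfl⟩

theorem fb_distance_converges_and_bounded_general (hβ : 0 < β) (hB : IsCocoercive β B)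
    (hA : IsMonotoneOperator A) (hΩ : (zerosOfSum A B).Nonempty) (hα : 0 < α) {μ : ℝ}
    (hU : ∀ k, (U k : H →ₗ[ℝ] H).IsSymmetric) (hcoercive : ∀ k z, α * ‖z‖ ^ 2 ≤ ⟪U k z, z⟫)
    (hVU : ∀ k, Function.LeftInverse (V k) (U k)) (hUV : ∀ k, Function.RightInverse (V k) (U k))
    (hUnorm : ∀ k, ‖U k‖ ≤ μ) (hη0 : ∀ k, 0 ≤ η k) (hη : Summable η)
    (hUmono : ∀ k z, ⟪U k z, z⟫ ≤ (1 + η k) * ⟪U (k + 1) z, z⟫) (hγ : ∀ k, 0 < γ k)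
    (hlam : ∀ k, 0 ≤ lam k) (hγlam : ∀ k, 2 * β * lam k + γ k * ‖U k‖ ≤ 4 * β)
    (ha : Summable fun k => lam k * ‖a k‖) (hb : Summable fun k => lam k * ‖b k‖)
    (hJ : ∀ k, IsResolvent A (V k) (γ k) (J k))
    (hx : ∀ k, x (k + 1) =
      x k + lam k • (J k (x k - γ k • U k (B (x k) + b k)) + a k - x k)) :
    (∀ z ∈ zerosOfSum A B,
      ∃ l : ℝ, Tendsto (fun k => ⟪V k (x k - z), x k - z⟫) atTop (nhds l)) ∧
    ∃ M : ℝ, ∀ k, ‖x k‖ ≤ M := by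
  have hUpos (k : ℕ) : (U k).IsPositive := (ContinuousLinearMap.isPositive_iff _).2
    ⟨hU k, fun z => (mul_nonneg hα.le (sq_nonneg _)).trans (hcoercive k z)⟩
  have hVpos (k : ℕ) : (V k).IsPositive := isPositive_of_rightInverse (hUpos k) (hUV k)
  have hconv (z : H) (hz : z ∈ zerosOfSum A B) :=
    exists_tendsto_energySeminorm_sub hβ hB hA hα hUpos hcoercive hVU hUV hVpos hη0 hη hUmono hγ
      hlam hγlam ha hb hJ hx hz
  constructor
  · intro z hz
    obtain ⟨l, hl⟩ := hconv z hz
    exact ⟨l ^ 2, (hl.pow 2).congr fun k => energySeminorm_sq (hVpos k) _⟩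
  · obtain ⟨z, hz⟩ := hΩ
    obtain ⟨l, hl⟩ := hconv z hz
    exact exists_norm_le_of_tendsto_energySeminorm_sub hUpos hUV hVpos hUnorm hl

end Iteration

end ForwardBackward

lemma two_mul_mul_add_le_of_lt_one_div {β α lam g : ℝ} (hβ : 0 < β) (hα : α = 2 * β / (4 * β - g))
    (hlam : lam < 1 / α) : 2 * β * lam + g ≤ 4 * β := by
  rw [hα, one_div_div, lt_div_iff₀ (by positivity)] at hlam
  linarith

theorem fb_distance_converges_and_bounded
    {H : Type*} [NormedAddCommGroup H] [InnerProductSpace ℝ H] [CompleteSpace H]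
    (β : ℝ) (hβ : 0 < β) (B : H → H)
    (hB : ∀ x y : H, ⟪x - y, B x - B y⟫ ≥ β * ‖B x - B y‖ ^ 2)
    (A : H → Set H)
    (hAmono : ∀ x y u v : H, u ∈ A x → v ∈ A y → ⟪x - y, u - v⟫ ≥ 0)
    (hAmax : ∀ z w : H, (∀ x : H, ∀ u ∈ A x, ⟪x - z, u - w⟫ ≥ 0) → w ∈ A z)
    (hΩ : {z : H | ∃ u ∈ A z, u + B z = 0}.Nonempty)
    (α : ℝ) (hα : 0 < α) (μ : ℝ) (hμ : 0 < μ)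
    (U V : ℕ → H →L[ℝ] H)
    (hU : ∀ k, IsSelfAdjoint (U k))
    (hUpos : ∀ k, ∀ x : H, ⟪U k x, x⟫ ≥ α * ‖x‖ ^ 2)
    (hV : ∀ k, IsSelfAdjoint (V k))
    (hVU : ∀ k, (V k).comp (U k) = ContinuousLinearMap.id ℝ H)
    (hUV : ∀ k, (U k).comp (V k) = ContinuousLinearMap.id ℝ H)
    (hUnorm : ∀ k, ‖U k‖ ≤ μ)
    (η : ℕ → ℝ) (hη0 : ∀ k, 0 ≤ η k) (hηsum : Summable η)
    (hUmono : ∀ k, ∀ z : H, (1 + η k) * ⟪U (k + 1) z, z⟫ ≥ ⟪U k z, z⟫)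
    (γ lam αk : ℕ → ℝ)
    (hγ : ∀ k, 0 < γ k ∧ γ k < 2 * β / ‖U k‖)
    (hαk : ∀ k, αk k = 2 * β / (4 * β - γ k * ‖U k‖))
    (hlam : ∀ k, 0 < lam k ∧ lam k < 1 / αk k)
    (a b : ℕ → H)
    (ha : Summable (fun k => lam k * ‖a k‖))
    (hb : Summable (fun k => lam k * ‖b k‖))
    (J : ℕ → H → H)
    (hJ : ∀ k, ∀ y : H, (1 / γ k) • (V k (y - J k y)) ∈ A (J k y))
    (x : ℕ → H)
    (hx : ∀ k, x (k + 1) =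
      x k + lam k • (J k (x k - γ k • U k (B (x k) + b k)) + a k - x k))
    :
    (∀ xs ∈ {z : H | ∃ u ∈ A z, u + B z = 0},
      ∃ l : ℝ, Tendsto (fun k => ⟪V k (x k - xs), x k - xs⟫) atTop (nhds l)) ∧
    (∃ M : ℝ, ∀ k, ‖x k‖ ≤ M) := by
  exact fb_distance_converges_and_bounded_general hβ hB hAmono hΩ hα (fun k => (hU k).isSymmetric)
    hUpos (fun k => DFunLike.congr_fun (hVU k)) (fun k => DFunLike.congr_fun (hUV k)) hUnorm hη0
    hηsum hUmono (fun k => (hγ k).1) (fun k => (hlam k).1.le)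
    (fun k => two_mul_mul_add_le_of_lt_one_div hβ (hαk k) (hlam k).2) ha hb hJ hx
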